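/- Let Φ : ℝ^{n×n} → ℝ^m be a linear operator, X a matrix with support S = S₁ ∪ … ∪ S_n, and y = Φ(X) + e with |e|₂ ≤ η, η > 0. If X* is a minimizer of inf ‖Z‖₁ subject to |y − Φ(Z)|₂ ≤ η having the same support S and the same signs of nonzero entries as X, then there exist β > 0 and λ₁, …, λ_n ≥ 0 with λ₁ + … + λ_n = 1 such that for every H = (h_1, …, h_n) ∈ ℝ^{n×n}: |Σ_{j=1}^n λ_j ⟨h_{j|S_j}, sgn(x_j)⟩| ≤ ‖H_{−S}‖₁ + β|Φ(H)|₂. -/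

import Mathlib

/-!
Every `Xstar + t H` with `Φ H = 0` is feasible along with `Xstar`, so `Xstar` minimises `‖·‖₁` on the affine space `Xstar + ker Φ`. Write
`F_j(H) = ⟨h_{j|S_j}, sgn x_j⟩ + |h_{j|S_jᶜ}|₁` for the one-sided derivative at `Xstar` of the
`j`-th column norm in the direction `H`. If all `F_j(H)` were negative for some `H ∈ ker Φ`, a small
step along `H` would shrink every column, hence the norm (`exists_dirDeriv_nonneg`). So
`max_j F_j ≥ 0` on `ker Φ`, and since the `F_j` are sublinear a separation argument
(`exists_simplex_weights`) produces convex weights `λ` with `∑ λ_j F_j ≥ 0` on `ker Φ`. Applied to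
`-H` this says that the linear functional `L(H) = ∑ λ_j ⟨h_{j|S_j}, sgn x_j⟩` is bounded on `ker Φ`
by the seminorm `‖H_{-S}‖₁`.

By Hahn–Banach, `L` restricted to `ker Φ` extends to a functional bounded by that seminorm
everywhere. The difference of `L` and the extension vanishes on `ker Φ`, so it factors through `Φ`
and is bounded by a multiple of `|Φ(H)|₂` (`exists_penalty_of_le_on_ker`).
-/

open scoped BigOperators
open scoped Classical

noncomputable section

/-- The l1 norm of the j-th column of X. -/
def colNorm1 {n : ℕ} (X : Matrix (Fin n) (Fin n) ℝ) (j : Fin n) : ℝ := ∑ i, |X i j|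

/-- The matrix norm ‖X‖₁ := max_j |x_j|₁. -/
def mnorm1 {n : ℕ} (X : Matrix (Fin n) (Fin n) ℝ) : ℝ := ⨆ j, colNorm1 X j

/-- Trace inner product on matrices. -/
def minner {n : ℕ} (A B : Matrix (Fin n) (Fin n) ℝ) : ℝ := ∑ i, ∑ j, A i j * B i j

/-- Euclidean norm on ℝ^m. -/
def vnorm2 {m : ℕ} (y : Fin m → ℝ) : ℝ := Real.sqrt (∑ k, (y k)^2)

/-- Frobenius norm. -/
def frob {n : ℕ} (X : Matrix (Fin n) (Fin n) ℝ) : ℝ := Real.sqrt (∑ i, ∑ j, (X i j)^2)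

/-- H_S : the matrix agreeing with H on the sparsity pattern S and zero elsewhere. -/
def restrict {n : ℕ} (S : Fin n → Finset (Fin n)) (H : Matrix (Fin n) (Fin n) ℝ) :
    Matrix (Fin n) (Fin n) ℝ := Matrix.of fun i j => if i ∈ S j then H i j else 0

/-- An s-sparsity pattern: S_j ⊆ rows, |S_j| ≤ s for every column j. -/
def SparsityPattern (n s : ℕ) (S : Fin n → Finset (Fin n)) : Prop := ∀ j, (S j).card ≤ s

/-- Σ_s^{n×n}: every column has at most s nonzero entries. -/
def ColSparse {n : ℕ} (s : ℕ) (X : Matrix (Fin n) (Fin n) ℝ) : Prop :=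
  ∀ j, ((Finset.univ : Finset (Fin n)).filter fun i => X i j ≠ 0).card ≤ s

/-- l1-column-flat: all columns have the same l1-norm. -/
def Flat {n : ℕ} (X : Matrix (Fin n) (Fin n) ℝ) : Prop :=
  ∀ j k, colNorm1 X j = colNorm1 X k

/-! ### Separation and extension -/

/-- Theorem of the alternative for finitely many sublinear functions: if at every point one of them
is nonnegative, then some convex combination of them is nonnegative everywhere. The weights come
from separating `0` from the open convex set of vectors strictly above some value `(F_j x)_j`. -/
lemma exists_simplex_weights {ι E : Type*} [Fintype ι] [Nonempty ι] [AddCommGroup E] [Module ℝ E]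
    (F : ι → E → ℝ) (hadd : ∀ j x y, F j (x + y) ≤ F j x + F j y)
    (hsmul : ∀ j (c : ℝ) x, 0 ≤ c → F j (c • x) = c * F j x)
    (hF : ∀ x, ∃ j, 0 ≤ F j x) :
    ∃ lam : ι → ℝ, (∀ j, 0 ≤ lam j) ∧ ∑ j, lam j = 1 ∧ ∀ x, 0 ≤ ∑ j, lam j * F j x := by
  have hzero : ∀ j, F j 0 = 0 := fun j => by simpa using hsmul j 0 0 le_rfl
  let C : Set (ι → ℝ) := {v | ∃ x, ∀ j, F j x < v j}
  have hCconv : Convex ℝ C := by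
    rintro v ⟨x, hx⟩ w ⟨y, hy⟩ a b ha hb hab
    refine ⟨a • x + b • y, fun j => ?_⟩
    have h1 := hadd j (a • x) (b • y)
    rw [hsmul j a x ha, hsmul j b y hb] at h1
    simp only [Pi.add_apply, Pi.smul_apply, smul_eq_mul]
    rcases ha.eq_or_lt with h | h
    · have hb1 : b = 1 := by linarith
      subst h hb1
      linarith [hy j]
    · have := mul_lt_mul_of_pos_left (hx j) h
      have := mul_le_mul_of_nonneg_left (hy j).le hb
      linarith
  have hCopen : IsOpen C := by
    have : C = ⋃ x, ⋂ j, {v : ι → ℝ | F j x < v j} := by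
      ext v; simp [C]
    rw [this]
    exact isOpen_iUnion fun x => isOpen_iInter_of_finite fun j =>
      isOpen_lt continuous_const (continuous_apply j)
  have h0 : (0 : ι → ℝ) ∉ C := by
    rintro ⟨x, hx⟩
    obtain ⟨j, hj⟩ := hF x
    exact absurd (hx j) (not_lt.mpr hj)
  obtain ⟨f, hf⟩ := geometric_hahn_banach_open_point hCconv hCopen h0
  rw [map_zero] at hf
  let μ : ι → ℝ := fun j => -f (Pi.single j 1)
  have hfμ : ∀ v, f v = -∑ j, μ j * v j := by
    intro v
    conv_lhs => rw [pi_eq_sum_univ' v]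
    simp only [map_sum, map_smul, μ, neg_mul, Finset.sum_neg_distrib, neg_neg, smul_eq_mul]
    refine Finset.sum_congr rfl fun j _ => ?_
    rw [mul_comm]
  have hpos : ∀ v ∈ C, 0 < ∑ j, μ j * v j := fun v hv => by
    have := hf v hv
    rw [hfμ] at this
    linarith
  have hsum : 0 < ∑ j, μ j := by
    simpa using hpos (fun _ => 1) ⟨0, fun j => by simp [hzero]⟩
  have hval : ∀ x, 0 ≤ ∑ j, μ j * F j x := by
    intro x
    refine le_of_forall_pos_le_add fun ε hε => ?_
    have h := hpos (fun j => F j x + ε / ∑ k, μ k) ⟨x, fun j => by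
      have := div_pos hε hsum
      linarith⟩
    simp only [mul_add, Finset.sum_add_distrib, ← Finset.sum_mul] at h
    rw [mul_div_cancel₀ _ hsum.ne'] at h
    exact h.le
  have hμ : ∀ j, 0 ≤ μ j := by
    intro j
    refine le_of_forall_pos_le_add fun ε hε => ?_
    have hd := div_pos hε hsum
    have h := hpos (fun i => (Pi.single j 1 : ι → ℝ) i + ε / ∑ k, μ k) ⟨0, fun i => by
      have : (0 : ℝ) ≤ (Pi.single j 1 : ι → ℝ) i := by
        by_cases hij : i = j
        · subst hij; simp
        · simp [hij]
      rw [hzero]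
      linarith⟩
    simp only [mul_add, Finset.sum_add_distrib, ← Finset.sum_mul] at h
    rw [mul_div_cancel₀ _ hsum.ne'] at h
    simpa [Pi.single_apply] using h.le
  refine ⟨fun j => μ j / ∑ k, μ k, fun j => div_nonneg (hμ j) hsum.le, ?_, fun x => ?_⟩
  · rw [← Finset.sum_div, div_self hsum.ne']
  · have : ∑ j, μ j / (∑ k, μ k) * F j x = (∑ j, μ j * F j x) / ∑ k, μ k := by
      rw [Finset.sum_div]
      exact Finset.sum_congr rfl fun j _ => by ring
    rw [this]
    exact div_nonneg (hval x) hsum.le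

lemma abs_le_vnorm2 {m : ℕ} (y : Fin m → ℝ) (k : Fin m) : |y k| ≤ vnorm2 y := by
  rw [← Real.sqrt_sq_eq_abs]
  exact Real.sqrt_le_sqrt
    (Finset.single_le_sum (f := fun k => (y k) ^ 2) (fun i _ => sq_nonneg _) (Finset.mem_univ k))

lemma vnorm2_neg {m : ℕ} (y : Fin m → ℝ) : vnorm2 (-y) = vnorm2 y := by
  simp [vnorm2]

/-- A linear functional dominated by a sublinear function `p` on `ker Φ` is dominated everywhere by
`p` plus a penalty proportional to `|Φ(x)|₂`. -/
lemma exists_penalty_of_le_on_ker {E : Type*} [AddCommGroup E] [Module ℝ E] {m : ℕ}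
    (Φ : E →ₗ[ℝ] (Fin m → ℝ)) (L : E →ₗ[ℝ] ℝ) (p : E → ℝ)
    (hsmul : ∀ c : ℝ, 0 < c → ∀ x, p (c • x) = c * p x) (hadd : ∀ x y, p (x + y) ≤ p x + p y)
    (hL : ∀ x, Φ x = 0 → L x ≤ p x) :
    ∃ β : ℝ, 0 < β ∧ ∀ x, L x ≤ p x + β * vnorm2 (Φ x) := by
  obtain ⟨g, hg, hgp⟩ := exists_extension_of_le_sublinear
    (⟨LinearMap.ker Φ, L.comp (LinearMap.ker Φ).subtype⟩ : E →ₗ.[ℝ] ℝ) p hsmul hadd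
    (fun x => hL x (LinearMap.mem_ker.mp x.2))
  have hmem : L - g ∈ (LinearMap.ker Φ).dualAnnihilator := by
    rw [Submodule.mem_dualAnnihilator]
    intro x hx
    have h : g x = L x := hg ⟨x, hx⟩
    simp [h]
  rw [← LinearMap.range_dualMap_eq_dualAnnihilator_ker] at hmem
  obtain ⟨q, hq⟩ := hmem
  let B : ℝ := ∑ k, |q (Pi.single k 1)|
  have hB : 0 ≤ B := Finset.sum_nonneg fun k _ => abs_nonneg _
  have hqB : ∀ y, q y ≤ B * vnorm2 y := by
    intro y
    have hy : q y = ∑ k, y k * q (Pi.single k 1) := by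
      conv_lhs => rw [← Finset.univ_sum_single y]
      rw [map_sum]
      refine Finset.sum_congr rfl fun k _ => ?_
      rw [← smul_eq_mul, ← map_smul, ← Pi.single_smul, smul_eq_mul, mul_one]
    rw [hy, Finset.sum_mul]
    refine Finset.sum_le_sum fun k _ => (le_abs_self _).trans ?_
    rw [abs_mul, mul_comm]
    exact mul_le_mul_of_nonneg_left (abs_le_vnorm2 y k) (abs_nonneg _)
  -- `B` may vanish, so `1` is added to make the constant positive.
  refine ⟨B + 1, by linarith, fun x => ?_⟩
  have h1 : q (Φ x) = L x - g x := by
    simpa using LinearMap.congr_fun hq x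
  have h2 := hqB (Φ x)
  have h3 : 0 ≤ vnorm2 (Φ x) := Real.sqrt_nonneg _
  linarith [hgp x]

/-! ### The column-wise norm -/

lemma colNorm1_le_mnorm1 {n : ℕ} (X : Matrix (Fin n) (Fin n) ℝ) (j : Fin n) :
    colNorm1 X j ≤ mnorm1 X :=
  le_ciSup (f := fun j => colNorm1 X j) (Set.finite_range _).bddAbove j

lemma colNorm1_add_le {n : ℕ} (X Y : Matrix (Fin n) (Fin n) ℝ) (j : Fin n) :
    colNorm1 (X + Y) j ≤ colNorm1 X j + colNorm1 Y j := by
  unfold colNorm1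
  rw [← Finset.sum_add_distrib]
  exact Finset.sum_le_sum fun i _ => abs_add_le _ _

lemma colNorm1_smul {n : ℕ} (c : ℝ) (hc : 0 ≤ c) (X : Matrix (Fin n) (Fin n) ℝ) (j : Fin n) :
    colNorm1 (c • X) j = c * colNorm1 X j := by
  simp [colNorm1, Finset.mul_sum, abs_mul, abs_of_nonneg hc]

lemma mnorm1_add_le {n : ℕ} [Nonempty (Fin n)] (X Y : Matrix (Fin n) (Fin n) ℝ) :
    mnorm1 (X + Y) ≤ mnorm1 X + mnorm1 Y :=
  ciSup_le fun j => (colNorm1_add_le X Y j).trans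
    (add_le_add (colNorm1_le_mnorm1 X j) (colNorm1_le_mnorm1 Y j))

lemma mnorm1_smul {n : ℕ} (c : ℝ) (hc : 0 ≤ c) (X : Matrix (Fin n) (Fin n) ℝ) :
    mnorm1 (c • X) = c * mnorm1 X := by
  simp only [mnorm1, colNorm1_smul c hc, Real.mul_iSup_of_nonneg hc]

lemma colNorm1_neg {n : ℕ} (X : Matrix (Fin n) (Fin n) ℝ) (j : Fin n) :
    colNorm1 (-X) j = colNorm1 X j := by
  simp [colNorm1]

lemma mnorm1_neg {n : ℕ} (X : Matrix (Fin n) (Fin n) ℝ) : mnorm1 (-X) = mnorm1 X := by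
  simp only [mnorm1, colNorm1_neg]

/-! ### One-sided derivatives of the column norms -/

/-- The off-support part `H ↦ H_{-S}` as a linear map. -/
def offSupp {n : ℕ} (S : Fin n → Finset (Fin n)) :
    Matrix (Fin n) (Fin n) ℝ →ₗ[ℝ] Matrix (Fin n) (Fin n) ℝ where
  toFun H := H - restrict S H
  map_add' A B := by
    ext i j
    by_cases h : i ∈ S j <;> simp [restrict, h]
  map_smul' c A := by
    ext i j
    by_cases h : i ∈ S j <;> simp [restrict, h]

/-- The linear functional `H ↦ ⟨h_{j|S_j}, sgn(x_j)⟩`. -/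
def signPair {n : ℕ} (S : Fin n → Finset (Fin n)) (X : Matrix (Fin n) (Fin n) ℝ) (j : Fin n) :
    Matrix (Fin n) (Fin n) ℝ →ₗ[ℝ] ℝ where
  toFun H := ∑ i ∈ S j, H i j * Real.sign (X i j)
  map_add' A B := by simp [add_mul, Finset.sum_add_distrib]
  map_smul' c A := by simp [Finset.mul_sum, mul_assoc]

lemma eventually_abs_add_mul (a h : ℝ) (ha : a ≠ 0) :
    ∀ᶠ t : ℝ in nhdsWithin 0 (Set.Ioi 0), |a + t * h| = |a| + t * (h * Real.sign a) := by
  have hc : Filter.Tendsto (fun t : ℝ => a + t * h) (nhdsWithin 0 (Set.Ioi 0)) (nhds a) := by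
    have : Continuous fun t : ℝ => a + t * h := by fun_prop
    have h2 := this.tendsto 0
    simp only [zero_mul, add_zero] at h2
    exact h2.mono_left nhdsWithin_le_nhds
  rcases lt_or_gt_of_ne ha with h0 | h0
  · filter_upwards [hc.eventually_lt_const h0] with t ht
    rw [abs_of_neg ht, abs_of_neg h0, Real.sign_of_neg h0]
    ring
  · filter_upwards [hc.eventually_const_lt h0] with t ht
    rw [abs_of_pos ht, abs_of_pos h0, Real.sign_of_pos h0]
    ring

/-- Near `Y` each column norm is, along any ray, affine with slope
`⟨h_{j|S_j}, sgn(y_j)⟩ + |h_{j|S_jᶜ}|₁`, where `S` is the support of `Y`. -/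
lemma eventually_colNorm1_add_smul {n : ℕ} (S : Fin n → Finset (Fin n))
    (Y H : Matrix (Fin n) (Fin n) ℝ) (hS : ∀ j i, i ∈ S j ↔ Y i j ≠ 0) (j : Fin n) :
    ∀ᶠ t : ℝ in nhdsWithin 0 (Set.Ioi 0),
      colNorm1 (Y + t • H) j = colNorm1 Y j + t * (signPair S Y j H + colNorm1 (offSupp S H) j) := by
  have hev : ∀ i, ∀ᶠ t : ℝ in nhdsWithin 0 (Set.Ioi 0),
      |Y i j + t * H i j| = |Y i j| +
        t * ((if i ∈ S j then H i j * Real.sign (Y i j) else 0) + |offSupp S H i j|) := by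
    intro i
    by_cases hi : i ∈ S j
    · filter_upwards [eventually_abs_add_mul (Y i j) (H i j) ((hS j i).mp hi)] with t ht
      simp [ht, hi, offSupp, restrict]
    · have h0 : Y i j = 0 := by
        by_contra h
        exact hi ((hS j i).mpr h)
      filter_upwards [self_mem_nhdsWithin] with t ht
      have ht' : 0 < t := ht
      simp [h0, hi, offSupp, restrict, abs_mul, abs_of_pos ht']
  filter_upwards [Filter.eventually_all.mpr hev] with t ht
  have hp : signPair S Y j H = ∑ i, if i ∈ S j then H i j * Real.sign (Y i j) else 0 := by
    simp [signPair]
  rw [hp]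
  simp only [colNorm1, Matrix.add_apply, Matrix.smul_apply, smul_eq_mul, ht]
  rw [Finset.sum_add_distrib, ← Finset.mul_sum, Finset.sum_add_distrib]

/-- If no step along `H` decreases `‖Y‖₁`, then some column norm has a nonnegative slope along `H`.
Columns that do not attain the maximum need no separate treatment: if all slopes are negative, then
all columns shrink together. -/
lemma exists_dirDeriv_nonneg {n : ℕ} [Nonempty (Fin n)] (S : Fin n → Finset (Fin n))
    (Y H : Matrix (Fin n) (Fin n) ℝ) (hS : ∀ j i, i ∈ S j ↔ Y i j ≠ 0)
    (hmin : ∀ t : ℝ, mnorm1 Y ≤ mnorm1 (Y + t • H)) :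
    ∃ j, 0 ≤ signPair S Y j H + colNorm1 (offSupp S H) j := by
  by_contra! hneg
  have hev := (Filter.eventually_all.mpr fun j => eventually_colNorm1_add_smul S Y H hS j).and
    (self_mem_nhdsWithin : Set.Ioi (0 : ℝ) ∈ nhdsWithin 0 (Set.Ioi 0))
  obtain ⟨t, ht, htpos⟩ := hev.exists
  have htpos' : 0 < t := htpos
  obtain ⟨j, hj⟩ := exists_eq_ciSup_of_finite (f := fun j => colNorm1 (Y + t • H) j)
  have h1 : mnorm1 Y ≤ colNorm1 (Y + t • H) j := (hmin t).trans_eq hj.symm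
  rw [ht j] at h1
  have h2 := mul_neg_of_pos_of_neg htpos' (hneg j)
  linarith [colNorm1_le_mnorm1 Y j]

/-- non-uniform necessary condition in the noisy case (Remark 3.7). -/
theorem noisy_necessary_condition {n m : ℕ} (hn : 0 < n)
    (Φ : Matrix (Fin n) (Fin n) ℝ →ₗ[ℝ] (Fin m → ℝ))
    (X : Matrix (Fin n) (Fin n) ℝ)
    (S : Fin n → Finset (Fin n))
    (hS : ∀ j i, i ∈ S j ↔ X i j ≠ 0)
    (η : ℝ) (hη : 0 < η) (e : Fin m → ℝ) (he : vnorm2 e ≤ η)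
    (Xstar : Matrix (Fin n) (Fin n) ℝ)
    (hfeas : vnorm2 ((Φ X + e) - Φ Xstar) ≤ η)
    (hmin : ∀ Z : Matrix (Fin n) (Fin n) ℝ, vnorm2 ((Φ X + e) - Φ Z) ≤ η →
        mnorm1 Xstar ≤ mnorm1 Z)
    (hsupp : ∀ i j, Xstar i j ≠ 0 ↔ X i j ≠ 0)
    (hsign : ∀ i j, X i j ≠ 0 → Real.sign (Xstar i j) = Real.sign (X i j)) :
    ∃ β : ℝ, 0 < β ∧ ∃ lam : Fin n → ℝ, (∀ j, 0 ≤ lam j) ∧ (∑ j, lam j = 1) ∧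
      ∀ H : Matrix (Fin n) (Fin n) ℝ,
        |∑ j, lam j * ∑ i ∈ S j, H i j * Real.sign (X i j)|
          ≤ mnorm1 (H - restrict S H) + β * vnorm2 (Φ H) := by
  have : Nonempty (Fin n) := ⟨⟨0, hn⟩⟩
  have hS' : ∀ j i, i ∈ S j ↔ Xstar i j ≠ 0 := fun j i => (hS j i).trans (hsupp i j).symm
  have hpair : ∀ j, signPair S Xstar j = signPair S X j := by
    intro j
    ext1 H
    exact Finset.sum_congr rfl fun i hi => by rw [hsign i j ((hS j i).mp hi)]
  obtain ⟨lam, hlam, hsum, hker⟩ := exists_simplex_weights (E := LinearMap.ker Φ)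
    (fun j H => signPair S X j (H : Matrix (Fin n) (Fin n) ℝ) +
      colNorm1 (offSupp S (H : Matrix (Fin n) (Fin n) ℝ)) j)
    (fun j A B => by
      have := colNorm1_add_le (offSupp S (A : Matrix (Fin n) (Fin n) ℝ)) (offSupp S B) j
      simp only [Submodule.coe_add, map_add]
      linarith)
    (fun j c A hc => by
      simp only [Submodule.coe_smul, map_smul, colNorm1_smul c hc, smul_eq_mul]
      ring)
    (fun H => by
      have h := exists_dirDeriv_nonneg S Xstar H hS' fun t => hmin _ (by
        have hH : Φ (H : Matrix (Fin n) (Fin n) ℝ) = 0 := LinearMap.mem_ker.mp H.2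
        rw [map_add, map_smul, hH, smul_zero, add_zero]
        exact hfeas)
      simpa only [hpair] using h)
  let L : Matrix (Fin n) (Fin n) ℝ →ₗ[ℝ] ℝ := ∑ j, lam j • signPair S X j
  have hLapp : ∀ H, L H = ∑ j, lam j * signPair S X j H := fun H => by simp [L]
  obtain ⟨β, hβ, hbound⟩ := exists_penalty_of_le_on_ker Φ L (fun H => mnorm1 (offSupp S H))
    (fun c hc H => by simp only [map_smul, mnorm1_smul c hc.le])
    (fun A B => by simp only [map_add]; exact mnorm1_add_le _ _)
    (fun H hH => by
      -- Nonnegativity of the weighted slope in the direction `-H` bounds `L H` from above.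
      have h := hker (-⟨H, LinearMap.mem_ker.mpr hH⟩)
      simp only [Submodule.coe_neg, map_neg, colNorm1_neg, mul_add, mul_neg,
        Finset.sum_add_distrib, Finset.sum_neg_distrib, ← hLapp] at h
      have h2 : ∑ j, lam j * colNorm1 (offSupp S H) j ≤ ∑ j, lam j * mnorm1 (offSupp S H) :=
        Finset.sum_le_sum fun j _ =>
          mul_le_mul_of_nonneg_left (colNorm1_le_mnorm1 _ j) (hlam j)
      rw [← Finset.sum_mul, hsum, one_mul] at h2
      linarith)
  refine ⟨β, hβ, lam, hlam, hsum, fun H => ?_⟩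
  have hpos := hbound H
  have hneg := hbound (-H)
  simp only [map_neg, mnorm1_neg, vnorm2_neg] at hneg
  have hgoal : |L H| ≤ mnorm1 (offSupp S H) + β * vnorm2 (Φ H) :=
    abs_le.mpr ⟨by linarith, hpos⟩
  rw [hLapp] at hgoal
  exact hgoal

end
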